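/- arXiv:math-ph/0512014 — 2 statements merged into one kernel-verified Lean document; each statement's English description precedes it below -/
import Mathlib

section
/- Let k ≥ 1, let I_k and Ĩ_k be two disjoint copies of {1,…,k}, and let P be an even partition of I_k ∪ Ĩ_k, i.e., every block B of P satisfies |B ∩ I_k| = |B ∩ Ĩ_k|. Then there exists a permutation σ̂ of {1,…,k} compatible with P such that deg(σ̂) ≥ s(π(P))/2. -/
/-- The extension `σ̃` of a permutation `σ` of `{1,…,k}` to `{0,1,…,k+1}`, with
`σ̃(0) = 0` and `σ̃(k+1) = k+1`.  Here `σ : Equiv.Perm (Fin k)` acts on `{0,…,k-1}`,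
shifted by one. -/
def sigmaTilde (k : ℕ) (σ : Equiv.Perm (Fin k)) (j : ℕ) : ℕ :=
  if h : 1 ≤ j ∧ j ≤ k then ((σ ⟨j - 1, by omega⟩ : Fin k) : ℕ) + 1 else j

/-- The point `(j, σ(j))` is a *peak*: `σ(j) < min {σ̃(j-1), σ̃(j+1)}`. -/
def IsPeakAt (k : ℕ) (σ : Equiv.Perm (Fin k)) (j : ℕ) : Prop :=
  sigmaTilde k σ j < min (sigmaTilde k σ (j - 1)) (sigmaTilde k σ (j + 1))

/-- The point `(j, σ(j))` is a *valley*: `σ(j) > max {σ̃(j-1), σ̃(j+1)}`. -/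
def IsValleyAt (k : ℕ) (σ : Equiv.Perm (Fin k)) (j : ℕ) : Prop :=
  max (sigmaTilde k σ (j - 1)) (sigmaTilde k σ (j + 1)) < sigmaTilde k σ j

/-- The point `(j, σ(j))` is a *ladder*: `σ(j) - 1 ∈ {σ̃(j-1), σ̃(j+1)}` and the point is
not a valley. -/
def IsLadderAt (k : ℕ) (σ : Equiv.Perm (Fin k)) (j : ℕ) : Prop :=
  (sigmaTilde k σ j - 1 = sigmaTilde k σ (j - 1) ∨
    sigmaTilde k σ j - 1 = sigmaTilde k σ (j + 1)) ∧ ¬IsValleyAt k σ j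

instance (k : ℕ) (σ : Equiv.Perm (Fin k)) (j : ℕ) : Decidable (IsPeakAt k σ j) := by
  unfold IsPeakAt; infer_instance

instance (k : ℕ) (σ : Equiv.Perm (Fin k)) (j : ℕ) : Decidable (IsValleyAt k σ j) := by
  unfold IsValleyAt; infer_instance

instance (k : ℕ) (σ : Equiv.Perm (Fin k)) (j : ℕ) : Decidable (IsLadderAt k σ j) := by
  unfold IsLadderAt; infer_instance

/-- `ℓ(σ)`: the number of `j ∈ {1,…,k}` such that `(j, σ(j))` is a ladder. -/
def ladderCount (k : ℕ) (σ : Equiv.Perm (Fin k)) : ℕ :=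
  ((Finset.Icc 1 k).filter fun j => IsLadderAt k σ j).card

/-- The degree of a permutation: `deg(σ) := k - ℓ(σ)`. -/
def permDegree (k : ℕ) (σ : Equiv.Perm (Fin k)) : ℕ := k - ladderCount k σ

lemma sigmaTilde_succ (k : ℕ) (σ : Equiv.Perm (Fin k)) (i : Fin k) :
    sigmaTilde k σ (i + 1) = σ i + 1 := by
  have h : 1 ≤ (i : ℕ) + 1 ∧ (i : ℕ) + 1 ≤ k := ⟨by omega, i.isLt⟩
  simp [sigmaTilde, h]

lemma sigmaTilde_injective (k : ℕ) (σ : Equiv.Perm (Fin k)) :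
    Function.Injective (sigmaTilde k σ) := by
  intro a b hab
  unfold sigmaTilde at hab
  split_ifs at hab with ha hb hb
  · have h : (⟨a - 1, by omega⟩ : Fin k) = ⟨b - 1, by omega⟩ :=
      σ.injective (Fin.ext (by omega))
    have := congrArg Fin.val h
    simp only at this
    omega
  · have := (σ ⟨a - 1, by omega⟩).isLt
    omega
  · have := (σ ⟨b - 1, by omega⟩).isLt
    omega
  · exact hab

lemma sigmaTilde_mul_swap_of_ne (k : ℕ) (σ : Equiv.Perm (Fin k)) {a b : Fin k} {n : ℕ}
    (ha : n ≠ a + 1) (hb : n ≠ b + 1) :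
    sigmaTilde k (σ * Equiv.swap a b) n = sigmaTilde k σ n := by
  unfold sigmaTilde
  split_ifs with h
  · rw [Equiv.Perm.mul_apply, Equiv.swap_apply_of_ne_of_ne]
    · exact fun h' => ha (by have := congrArg Fin.val h'; simp only at this; omega)
    · exact fun h' => hb (by have := congrArg Fin.val h'; simp only at this; omega)
  · rfl

/-- Exchanging the value at a ladder with any other value destroys the ladder. -/
lemma IsLadderAt.not_mul_swap {k : ℕ} {σ : Equiv.Perm (Fin k)} {a b : Fin k} (hab : b ≠ a)
    (h : IsLadderAt k σ (a + 1)) : ¬ IsLadderAt k (σ * Equiv.swap a b) (a + 1) := by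
  have hne : (b : ℕ) ≠ a := fun h' => hab (Fin.ext h')
  have hA : sigmaTilde k (σ * Equiv.swap a b) (a + 1) = sigmaTilde k σ (b + 1) := by
    simp [sigmaTilde_succ]
  have hB : sigmaTilde k (σ * Equiv.swap a b) (b + 1) = sigmaTilde k σ (a + 1) := by
    simp [sigmaTilde_succ]
  have hpa := sigmaTilde_succ k σ a
  have hpb := sigmaTilde_succ k σ b
  have inj := sigmaTilde_injective k σ
  have h1 : sigmaTilde k σ (a + 1) ≠ sigmaTilde k σ (b + 1) := inj.ne (by omega)
  have h2 : sigmaTilde k σ (a + 1) ≠ sigmaTilde k σ a := inj.ne (by omega)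
  have h3 : sigmaTilde k σ (a + 1) ≠ sigmaTilde k σ (a + 1 + 1) := inj.ne (by omega)
  have h4 : sigmaTilde k σ a ≠ sigmaTilde k σ (a + 1 + 1) := inj.ne (by omega)
  unfold IsLadderAt IsValleyAt at h ⊢
  rw [hA]
  simp only [Nat.add_sub_cancel] at h ⊢
  by_cases hl : (b : ℕ) + 1 = a
  · rw [sigmaTilde_mul_swap_of_ne k σ (n := a + 1 + 1) (by omega) (by omega)]
    rw [hl] at hB hpb h1 ⊢
    rw [hB]
    omega
  · rw [sigmaTilde_mul_swap_of_ne k σ (n := a) (by omega) (by omega)]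
    by_cases hr : (b : ℕ) = a + 1
    · rw [hr] at hB hpb h1 ⊢
      rw [hB]
      omega
    · rw [sigmaTilde_mul_swap_of_ne k σ (n := a + 1 + 1) (by omega) (by omega)]
      have h5 : sigmaTilde k σ (b + 1) ≠ sigmaTilde k σ a := inj.ne (by omega)
      have h6 : sigmaTilde k σ (b + 1) ≠ sigmaTilde k σ (a + 1 + 1) := inj.ne (by omega)
      omega

lemma permDegree_eq_card_not_isLadderAt (k : ℕ) (σ : Equiv.Perm (Fin k)) :
    permDegree k σ =
      (Finset.univ.filter fun i : Fin k => ¬ IsLadderAt k σ (i + 1)).card := by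
  have hcount : ladderCount k σ =
      (Finset.univ.filter fun i : Fin k => IsLadderAt k σ (i + 1)).card := by
    symm
    unfold ladderCount
    refine Finset.card_bij (fun i _ => (i : ℕ) + 1) ?_ ?_ ?_
    · intro i hi
      have := i.isLt
      simp only [Finset.mem_filter, Finset.mem_univ, true_and, Finset.mem_Icc] at hi ⊢
      exact ⟨by omega, hi⟩
    · intro i _ j _ hij
      exact Fin.ext (by omega)
    · intro n hn
      simp only [Finset.mem_filter, Finset.mem_Icc] at hn
      have hn' : n - 1 + 1 = n := by omega
      refine ⟨⟨n - 1, by omega⟩, ?_, hn'⟩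
      simpa [hn'] using hn.2
  have := Finset.card_filter_add_card_filter_not (s := (Finset.univ : Finset (Fin k)))
    (fun i : Fin k => IsLadderAt k σ (i + 1))
  rw [Finset.card_univ, Fintype.card_fin] at this
  unfold permDegree
  omega

lemma exists_perm_compatible (k : ℕ) (P : Setoid (Fin k ⊕ Fin k))
    (heven : ∀ x : Fin k ⊕ Fin k,
      Nat.card {i : Fin k // P.r x (Sum.inl i)} = Nat.card {i : Fin k // P.r x (Sum.inr i)}) :
    ∃ σ : Equiv.Perm (Fin k), ∀ i : Fin k, P.r (Sum.inl i) (Sum.inr (σ i)) := by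
  let f : Fin k → Quotient P := fun i => Quotient.mk P (Sum.inl i)
  let g : Fin k → Quotient P := fun i => Quotient.mk P (Sum.inr i)
  have hfib : ∀ q : Quotient P, Nonempty ({i // f i = q} ≃ {i // g i = q}) := by
    intro q
    induction q using Quotient.inductionOn with
    | _ x =>
      have hf : ∀ i, f i = Quotient.mk P x ↔ P.r x (Sum.inl i) := fun i =>
        eq_comm.trans Quotient.eq
      have hg : ∀ i, g i = Quotient.mk P x ↔ P.r x (Sum.inr i) := fun i =>
        eq_comm.trans Quotient.eq
      exact ⟨(Equiv.subtypeEquivRight hf).trans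
        ((Finite.card_eq.1 (heven x)).some.trans (Equiv.subtypeEquivRight hg).symm)⟩
  let e := fun q => (hfib q).some
  refine ⟨(Equiv.sigmaFiberEquiv f).symm.trans
    ((Equiv.sigmaCongrRight e).trans (Equiv.sigmaFiberEquiv g)), fun i => ?_⟩
  exact Quotient.exact (s := P) (e (f i) ⟨i, rfl⟩).2.symm

/-- The paper's Lemma 8.2: for every even partition `P` of `I_k ∪ Ĩ_k` (two disjoint
copies of `{1,…,k}`, coded as `Fin k ⊕ Fin k`, evenness meaning that every block contains
as many elements of the first copy as of the second), there exists a permutation `σ̂`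
compatible with `P` (i.e. `i` and `σ̂(i)` always lie in the same block) such that
`deg(σ̂) ≥ s(π(P))/2`, where `s(π(P))` is the number of elements of `{1,…,k}` lying in
nontrivial blocks of the projected partition `π(P)`. -/
theorem exists_compatible_perm_of_even_partition
    (k : ℕ) (hk : 1 ≤ k) (P : Setoid (Fin k ⊕ Fin k))
    (heven : ∀ x : Fin k ⊕ Fin k,
      Nat.card {i : Fin k // P.r x (Sum.inl i)} = Nat.card {i : Fin k // P.r x (Sum.inr i)}) :
    ∃ σ : Equiv.Perm (Fin k),
      (∀ i : Fin k, P.r (Sum.inl i) (Sum.inr (σ i))) ∧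
        Nat.card {i : Fin k // ∃ j : Fin k, j ≠ i ∧ P.r (Sum.inl i) (Sum.inl j)}
          ≤ 2 * permDegree k σ := by
  classical
  let C : Finset (Equiv.Perm (Fin k)) :=
    Finset.univ.filter fun σ => ∀ i, P.r (Sum.inl i) (Sum.inr (σ i))
  let S : Finset (Fin k) :=
    Finset.univ.filter fun i => ∃ j : Fin k, j ≠ i ∧ P.r (Sum.inl i) (Sum.inl j)
  have hS : Nat.card {i : Fin k // ∃ j : Fin k, j ≠ i ∧ P.r (Sum.inl i) (Sum.inl j)} = S.card := by
    rw [Nat.card_eq_fintype_card, Fintype.card_subtype]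
  have hC : C.Nonempty := by
    obtain ⟨σ, hσ⟩ := exists_perm_compatible k P heven
    exact ⟨σ, by simpa [C] using hσ⟩
  have hhalf : ∀ i ∈ S, C.card ≤ 2 * (C.filter fun σ => ¬ IsLadderAt k σ (i + 1)).card := by
    intro i hi
    obtain ⟨j, hji, hij⟩ : ∃ j : Fin k, j ≠ i ∧ P.r (Sum.inl i) (Sum.inl j) := by
      simpa [S] using hi
    have hle : (C.filter fun σ => IsLadderAt k σ (i + 1)).card ≤
        (C.filter fun σ => ¬ IsLadderAt k σ (i + 1)).card := by
      refine Finset.card_le_card_of_injOn (fun σ => σ * Equiv.swap i j) ?_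
        (mul_left_injective _).injOn
      intro σ hσ
      simp only [C, Finset.coe_filter, Finset.mem_filter, Finset.mem_univ, true_and,
        Set.mem_ofPred_eq] at hσ ⊢
      refine ⟨fun m => ?_, hσ.2.not_mul_swap hji⟩
      rw [Equiv.Perm.mul_apply]
      refine P.trans' ?_ (hσ.1 _)
      by_cases hmi : m = i
      · subst hmi
        rwa [Equiv.swap_apply_left]
      by_cases hmj : m = j
      · subst hmj
        rw [Equiv.swap_apply_right]
        exact P.symm' hij
      rw [Equiv.swap_apply_of_ne_of_ne hmi hmj]
    have := Finset.card_filter_add_card_filter_not (s := C) (fun σ => IsLadderAt k σ (i + 1))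
    omega
  have hsum : ∑ _σ ∈ C, S.card ≤ ∑ σ ∈ C, 2 * permDegree k σ := by
    calc ∑ _σ ∈ C, S.card = ∑ _i ∈ S, C.card := by
          simp only [Finset.sum_const, smul_eq_mul, mul_comm]
      _ ≤ ∑ i ∈ S, 2 * (C.filter fun σ => ¬ IsLadderAt k σ (i + 1)).card :=
          Finset.sum_le_sum hhalf
      _ ≤ ∑ i : Fin k, 2 * (C.filter fun σ => ¬ IsLadderAt k σ (i + 1)).card :=
          Finset.sum_le_univ_sum_of_nonneg fun _ => Nat.zero_le _
      _ = ∑ σ ∈ C, 2 * permDegree k σ := by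
          simp only [permDegree_eq_card_not_isLadderAt, Finset.card_filter, ← Finset.mul_sum]
          rw [Finset.sum_comm]
  obtain ⟨σ, hσC, hσ⟩ := Finset.exists_le_of_sum_le hC hsum
  exact ⟨σ, by simpa [C] using hσC, hS.trans_le hσ⟩
end

section
/- Let k ≥ 1 and let σ be a permutation of {1,…,k} with σ ≠ id. Then k − |I_ℓ*(σ)| ≤ 2·deg(σ), where I_ℓ*(σ) is the set of internal ladder indices of σ. -/
/-- The set `I_ℓ` of ladder indices `i ∈ {1,…,k}` (as values: `(σ̃⁻¹(i), i)` is a ladder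
point on the graph of `σ`). -/
def ladderSet (k : ℕ) (σ : Equiv.Perm (Fin k)) : Set ℕ :=
  {i | 1 ≤ i ∧ i ≤ k ∧ IsLadderAt k σ (sigmaTilde k σ⁻¹ i)}

/-- The set `I_ℓ*` of *internal* ladder indices:
`i ∈ I_ℓ` with `|σ̃⁻¹(i-1) - σ̃⁻¹(i)| = 1` and `|σ̃⁻¹(i+1) - σ̃⁻¹(i)| = 1`. -/
def internalLadderSet (k : ℕ) (σ : Equiv.Perm (Fin k)) : Set ℕ :=
  {i | i ∈ ladderSet k σ ∧
    ((sigmaTilde k σ⁻¹ (i - 1) : ℤ) - (sigmaTilde k σ⁻¹ i : ℤ)).natAbs = 1 ∧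
    ((sigmaTilde k σ⁻¹ (i + 1) : ℤ) - (sigmaTilde k σ⁻¹ i : ℤ)).natAbs = 1}

theorem sigmaTilde_mem_iff (k : ℕ) (σ : Equiv.Perm (Fin k)) (j : ℕ) :
    (1 ≤ sigmaTilde k σ j ∧ sigmaTilde k σ j ≤ k) ↔ (1 ≤ j ∧ j ≤ k) := by
  unfold sigmaTilde
  split_ifs with h
  · have := (σ ⟨j - 1, by omega⟩).isLt
    omega
  · rfl

theorem sigmaTilde_of_not_mem {k : ℕ} (σ : Equiv.Perm (Fin k)) {j : ℕ}
    (hj : ¬(1 ≤ j ∧ j ≤ k)) : sigmaTilde k σ j = j :=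
  dif_neg hj

theorem sigmaTilde_inv_sigmaTilde (k : ℕ) (σ : Equiv.Perm (Fin k)) (j : ℕ) :
    sigmaTilde k σ⁻¹ (sigmaTilde k σ j) = j := by
  by_cases h : 1 ≤ j ∧ j ≤ k
  · have h' := (sigmaTilde_mem_iff k σ j).2 h
    rw [sigmaTilde, dif_pos h']
    simp only [sigmaTilde, dif_pos h, Nat.add_sub_cancel, Fin.eta, ← Equiv.Perm.mul_apply,
      inv_mul_cancel, Equiv.Perm.one_apply]
    omega
  · rw [sigmaTilde_of_not_mem σ h, sigmaTilde_of_not_mem σ⁻¹ h]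

theorem sigmaTilde_sigmaTilde_inv (k : ℕ) (σ : Equiv.Perm (Fin k)) (i : ℕ) :
    sigmaTilde k σ (sigmaTilde k σ⁻¹ i) = i := by
  simpa using sigmaTilde_inv_sigmaTilde k σ⁻¹ i

/-- If `i` is a ladder index, then `i - 1` occupies a position adjacent to that of `i`. -/
theorem natAbs_pred_sub_eq_one_of_mem_ladderSet {k : ℕ} {σ : Equiv.Perm (Fin k)} {i : ℕ}
    (hi : i ∈ ladderSet k σ) :
    ((sigmaTilde k σ⁻¹ (i - 1) : ℤ) - (sigmaTilde k σ⁻¹ i : ℤ)).natAbs = 1 := by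
  obtain ⟨h1, hk, h, -⟩ := hi
  have hpos := (sigmaTilde_mem_iff k σ⁻¹ i).2 ⟨h1, hk⟩
  rw [sigmaTilde_sigmaTilde_inv] at h
  rcases h with h | h <;> rw [h, sigmaTilde_inv_sigmaTilde] <;> omega

/-- If the largest index `k` is a ladder index, then it sits next to `k + 1`. -/
theorem sigmaTilde_inv_succ_of_mem_ladderSet {k : ℕ} {σ : Equiv.Perm (Fin k)}
    (hk : k ∈ ladderSet k σ) :
    sigmaTilde k σ⁻¹ (k + 1) = sigmaTilde k σ⁻¹ k + 1 := by
  obtain ⟨h1, -, -, hv⟩ := hk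
  have hpos := (sigmaTilde_mem_iff k σ⁻¹ k).2 ⟨h1, le_rfl⟩
  rw [IsValleyAt, sigmaTilde_sigmaTilde_inv, max_lt_iff] at hv
  have hinv := sigmaTilde_inv_sigmaTilde k σ
  set j := sigmaTilde k σ⁻¹ k with hj
  have hprev : sigmaTilde k σ (j - 1) < k := by
    by_cases h : 1 ≤ j - 1 ∧ j - 1 ≤ k
    · have hle := ((sigmaTilde_mem_iff k σ (j - 1)).2 h).2
      refine lt_of_le_of_ne hle fun he => ?_
      have := hinv (j - 1)
      rw [he] at this
      omega
    · rw [sigmaTilde_of_not_mem σ h]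
      omega
  have hnext : ¬ sigmaTilde k σ (j + 1) < k := fun h => hv ⟨hprev, h⟩
  have hne : sigmaTilde k σ (j + 1) ≠ k := fun he => by
    have := hinv (j + 1)
    rw [he] at this
    omega
  have hout : ¬(1 ≤ j + 1 ∧ j + 1 ≤ k) := fun h => by
    have := (sigmaTilde_mem_iff k σ (j + 1)).2 h
    omega
  rw [sigmaTilde_of_not_mem σ⁻¹ (by omega)]
  omega

/-- The successor of a non-internal ladder index is an index in `{1,…,k}` that is not a ladder. -/
theorem succ_not_mem_ladderSet {k : ℕ} {σ : Equiv.Perm (Fin k)} {i : ℕ}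
    (hi : i ∈ ladderSet k σ) (hi' : i ∉ internalLadderSet k σ) :
    i + 1 ≤ k ∧ i + 1 ∉ ladderSet k σ := by
  have hnext : ((sigmaTilde k σ⁻¹ (i + 1) : ℤ) - (sigmaTilde k σ⁻¹ i : ℤ)).natAbs ≠ 1 :=
    fun h => hi' ⟨hi, natAbs_pred_sub_eq_one_of_mem_ladderSet hi, h⟩
  refine ⟨Nat.lt_of_le_of_ne hi.2.1 ?_, fun h => ?_⟩
  · rintro rfl
    have := sigmaTilde_inv_succ_of_mem_ladderSet hi
    omega
  · have := natAbs_pred_sub_eq_one_of_mem_ladderSet h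
    rw [Nat.add_sub_cancel] at this
    omega

open Classical in
/-- Ladders may be counted by values instead of positions. -/
theorem ladderCount_eq_card_filter (k : ℕ) (σ : Equiv.Perm (Fin k)) :
    ladderCount k σ = ((Finset.Icc 1 k).filter (· ∈ ladderSet k σ)).card := by
  refine Finset.card_bij' (fun j _ => sigmaTilde k σ j) (fun i _ => sigmaTilde k σ⁻¹ i)
    ?_ ?_ (fun j _ => sigmaTilde_inv_sigmaTilde k σ j) (fun i _ => sigmaTilde_sigmaTilde_inv k σ i)
  · intro j hj
    rw [Finset.mem_filter, Finset.mem_Icc] at hj ⊢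
    have h := (sigmaTilde_mem_iff k σ j).2 hj.1
    refine ⟨h, h.1, h.2, ?_⟩
    rw [sigmaTilde_inv_sigmaTilde]
    exact hj.2
  · intro i hi
    rw [Finset.mem_filter, Finset.mem_Icc] at hi ⊢
    exact ⟨(sigmaTilde_mem_iff k σ⁻¹ i).2 hi.1, hi.2.2.2⟩

/-- Inequality (8.3) in the proof of the paper's Lemma 8.2: for any permutation
`σ ≠ id` of `{1,…,k}`, one has `k - |I_ℓ*(σ)| ≤ 2 deg(σ)`. -/
theorem card_nonInternalLadder_le_two_deg
    (k : ℕ) (hk : 1 ≤ k) (σ : Equiv.Perm (Fin k)) (hσ : σ ≠ 1) :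
    k - (internalLadderSet k σ).ncard ≤ 2 * permDegree k σ := by
  classical
  set L := (Finset.Icc 1 k).filter (· ∈ ladderSet k σ) with hL
  set N := (Finset.Icc 1 k).filter (· ∉ ladderSet k σ) with hN
  have hLN : L.card + N.card = k := by
    rw [hL, hN, Finset.card_filter_add_card_filter_not, Nat.card_Icc, Nat.add_sub_cancel]
  have hint : internalLadderSet k σ = ↑(L.filter (· ∈ internalLadderSet k σ)) := by
    ext i
    simp only [hL, Finset.coe_filter, Finset.mem_filter, Finset.mem_Icc, Set.mem_ofPred_eq]
    exact ⟨fun h => ⟨⟨⟨h.1.1, h.1.2.1⟩, h.1⟩, h⟩, fun h => h.2⟩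
  have hsplit := Finset.card_filter_add_card_filter_not (s := L) (· ∈ internalLadderSet k σ)
  have hinj : (L.filter (· ∉ internalLadderSet k σ)).card ≤ N.card := by
    refine Finset.card_le_card_of_injOn (· + 1) (fun i hi => ?_)
      (fun _ _ _ _ h => Nat.succ_injective h)
    simp only [hL, Finset.coe_filter, Finset.mem_filter, Set.mem_ofPred_eq] at hi
    have h := succ_not_mem_ladderSet hi.1.2 hi.2
    simp only [hN, Finset.coe_filter, Finset.mem_Icc, Set.mem_ofPred_eq]
    exact ⟨⟨Nat.le_add_left 1 i, h.1⟩, h.2⟩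
  have hcard := congrArg Set.ncard hint
  rw [Set.ncard_coe_finset] at hcard
  rw [permDegree, ladderCount_eq_card_filter, ← hL, hcard]
  omega
end
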